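/- Let X be a quasi-Banach space carrying two equivalent r-norms ‖·‖₀ and ‖·‖₁ (0 < r ≤ 1), and suppose 1 ≤ a < ∞ and 0 < θ < r/(2−r). Then there is a constant C = C(a,θ,r) such that if the type 2 constant satisfies T₂(X₀) ≤ a, then the Lions–Peetre interpolation space X_θ = (X₀,X₁)_{θ,2} satisfies δ_{X_θ} ≤ C, i.e. the ‖·‖_{θ,2} quasi-norm is C-equivalent to its Banach envelope norm. -/

import Mathlib

open scoped ENNReal NNReal BigOperators

universe uX uY uZ uW uE uO uG uV

/-- The sign `±1` attached to a Boolean. -/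
noncomputable def rsign (b : Bool) : ℝ := if b then 1 else -1

section Defs

variable {X : Type uX} {Y : Type uY} {Z : Type uZ} {W : Type uW}
  [AddCommGroup X] [Module ℝ X] [AddCommGroup Y] [Module ℝ Y]
  [AddCommGroup Z] [Module ℝ Z] [AddCommGroup W] [Module ℝ W]

/-- An `r`-norm on a real vector space (`0 < r ≤ 1`): the quasi-norm satisfies
`‖x+y‖^r ≤ ‖x‖^r + ‖y‖^r`. -/
structure RNormOn (X : Type uX) [AddCommGroup X] [Module ℝ X] (r : ℝ) : Type uX where
  q : X → ℝ
  nonneg : ∀ x, 0 ≤ q x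
  eq_zero_iff : ∀ x, q x = 0 ↔ x = 0
  smul_eq : ∀ (a : ℝ) (x : X), q (a • x) = |a| * q x
  rtri : ∀ x y, q (x + y) ^ r ≤ q x ^ r + q y ^ r

/-- Completeness of a quasi-normed space, via Cauchy sequences for the quasi-norm
(the induced topology is metrizable, so sequences suffice). -/
def CauchyComplete (q : X → ℝ) : Prop :=
  ∀ f : ℕ → X, (∀ ε > (0:ℝ), ∃ N, ∀ m ≥ N, ∀ n ≥ N, q (f m - f n) < ε) →
    ∃ x, ∀ ε > (0:ℝ), ∃ N, ∀ n ≥ N, q (f n - x) < ε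

/-- The `L_p`-average of `q (∑ᵢ εᵢ xᵢ)` over all choices of signs `εᵢ = ±1`
(the normalized counting measure on `D_n = {-1,1}ⁿ`). -/
noncomputable def radAvg (q : X → ℝ) (p : ℝ) {n : ℕ} (x : Fin n → X) : ℝ :=
  (((2:ℝ) ^ n)⁻¹ * ∑ ε : Fin n → Bool, q (∑ i, rsign (ε i) • x i) ^ p) ^ (1 / p)

/-- `(X,q)` has cotype `p` with constant at most `C`. -/
def CotypeConstLe (q : X → ℝ) (p C : ℝ) : Prop :=
  ∀ (n : ℕ) (x : Fin n → X), (∑ i, q (x i) ^ p) ^ (1 / p) ≤ C * radAvg q p x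

/-- `(X,q)` has cotype `p`. -/
def HasCotype (q : X → ℝ) (p : ℝ) : Prop := ∃ C, 0 < C ∧ CotypeConstLe q p C

/-- `(X,q)` has type 2 constant at most `C`. -/
def Type2ConstLe (q : X → ℝ) (C : ℝ) : Prop :=
  ∀ (n : ℕ) (x : Fin n → X),
    radAvg q (2:ℝ) x ≤ C * (∑ i, q (x i) ^ (2:ℝ)) ^ (1/2 : ℝ)

/-- The Lions–Peetre `K₂`-functional of the couple `((X,q₀),(X,q₁))`. -/
noncomputable def K2fn (q0 q1 : X → ℝ) (t : ℝ) (x : X) : ℝ :=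
  sInf {c | ∃ x0 x1, x = x0 + x1 ∧ c = Real.sqrt (q0 x0 ^ 2 + t ^ 2 * q1 x1 ^ 2)}

/-- The Lions–Peetre interpolation quasi-norm `‖x‖_{θ,2}`. -/
noncomputable def thetaNorm (q0 q1 : X → ℝ) (θ : ℝ) (x : X) : ℝ :=
  Real.sqrt (θ * (1 - θ)) *
    Real.sqrt (∫ t in Set.Ioi (0:ℝ), K2fn q0 q1 t x ^ 2 / t ^ (1 + 2 * θ))

/-- The Banach envelope norm of `(X,q)` : the gauge (Minkowski functional) of the
convex hull of the unit ball of `q`. -/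
noncomputable def envNorm (q : X → ℝ) : X → ℝ := gauge (convexHull ℝ {x | q x ≤ 1})

end Defs

/-!
The sign map `(xᵢ) ↦ ∑ εᵢ xᵢ` from `ℓ₂ⁿ(X)` to `L₂({-1, 1}ⁿ; X)` has norm at most `a` for `X₀`, by
the type 2 hypothesis, and at most `n ^ (1 / r - 1 / 2)` for `X₁`, trivially. Interpolating, it has
norm at most `a ^ (1 - θ) * n ^ (θ * (1 / r - 1 / 2))` for `X_θ`, so any `n` unit vectors of `X_θ`
have a signed sum of size `O(n ^ β)` with `β = 1 / 2 + θ * (1 / r - 1 / 2)`, and `β < 1` exactly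
when `θ < r / (2 - r)`. A sum of `2 ^ m` unit vectors is, up to sign, its best signed sum plus twice
the sum over the minority sign. Repeating this on the at most `2 ^ (m - 1)` vectors of the minority,
and so on, bounds the average of `2 ^ m` unit vectors by a geometric series that converges because
`β < 1`. Such averages, with repetitions, approximate every convex combination of unit vectors.
-/

open Filter MeasureTheory Topology

section RSeminorm

/-- A homogeneous functional whose `r`-th power is subadditive: an `r`-norm without definiteness.
It covers the two given `r`-norms, the functionals `K₂(t, ·)` and the interpolation quasi-norm. -/
structure IsRSeminorm {X : Type*} [AddCommGroup X] [Module ℝ X] (r : ℝ) (q : X → ℝ) : Prop where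
  nonneg : ∀ x, 0 ≤ q x
  smul : ∀ (c : ℝ) (x : X), q (c • x) = |c| * q x
  add_rpow_le : ∀ x y, q (x + y) ^ r ≤ q x ^ r + q y ^ r

lemma rpow_rpow_two_div {r u : ℝ} (hr : r ≠ 0) (hu : 0 ≤ u) : (u ^ r) ^ (2 / r) = u ^ 2 := by
  rw [← Real.rpow_mul hu, mul_div_cancel₀ _ hr, Real.rpow_two]

lemma mul_rpow_div_rpow_eq {r l b : ℝ} (hr : 0 < r) (hl : 0 < l) (hb : 0 ≤ b) :
    l * (b ^ r / l) ^ (2 / r) = l ^ (1 - 2 / r) * b ^ 2 := by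
  rw [Real.div_rpow (by positivity) hl.le, rpow_rpow_two_div hr.ne' hb, Real.rpow_sub hl,
    Real.rpow_one]
  ring

lemma exists_weights_rpow_add_rpow_eq {r b c : ℝ} (hr : 0 < r) (hb : 0 < b) (hc : 0 < c) :
    ∃ l m : ℝ, 0 < l ∧ 0 < m ∧ l + m = 1 ∧
      l ^ (1 - 2 / r) * b ^ 2 + m ^ (1 - 2 / r) * c ^ 2 = (b ^ r + c ^ r) ^ (2 / r) := by
  have hl : 0 < b ^ r / (b ^ r + c ^ r) := by positivity
  have hm : 0 < c ^ r / (b ^ r + c ^ r) := by positivity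
  have hlm : b ^ r / (b ^ r + c ^ r) + c ^ r / (b ^ r + c ^ r) = 1 := by
    rw [← add_div, div_self (by positivity)]
  refine ⟨_, _, hl, hm, hlm, ?_⟩
  rw [← mul_rpow_div_rpow_eq hr hl hb.le, ← mul_rpow_div_rpow_eq hr hm hc.le,
    div_div_cancel₀ (by positivity), div_div_cancel₀ (by positivity), ← add_mul, hlm, one_mul]

-- Forwards this is convexity of `u ↦ u ^ (2 / r)`. The right-hand side is linear in `a ^ 2`,
-- `b ^ 2`, `c ^ 2`, so it passes to infima and integrals: this replaces Minkowski's inequality in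
-- `L_{2/r}`.
lemma rpow_le_rpow_add_rpow_iff_forall_weights {r a b c : ℝ} (hr0 : 0 < r) (hr2 : r ≤ 2)
    (ha : 0 ≤ a) (hb : 0 ≤ b) (hc : 0 ≤ c) :
    a ^ r ≤ b ^ r + c ^ r ↔ ∀ l m : ℝ, 0 < l → 0 < m → l + m = 1 →
      a ^ 2 ≤ l ^ (1 - 2 / r) * b ^ 2 + m ^ (1 - 2 / r) * c ^ 2 := by
  constructor
  · intro h l m hl hm hlm
    have hconv := (convexOn_rpow ((one_le_div₀ hr0).2 hr2)).2 (x := b ^ r / l) (y := c ^ r / m)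
      (Set.mem_Ici.2 (by positivity)) (Set.mem_Ici.2 (by positivity)) hl.le hm.le hlm
    simp only [smul_eq_mul, mul_div_cancel₀ _ hl.ne', mul_div_cancel₀ _ hm.ne',
      mul_rpow_div_rpow_eq hr0 hl hb, mul_rpow_div_rpow_eq hr0 hm hc] at hconv
    calc a ^ 2 = (a ^ r) ^ (2 / r) := (rpow_rpow_two_div hr0.ne' ha).symm
      _ ≤ (b ^ r + c ^ r) ^ (2 / r) := by gcongr
      _ ≤ _ := hconv
  · intro h
    have h_perturbed : ∀ δ > (0 : ℝ), a ^ r ≤ (b + δ) ^ r + (c + δ) ^ r := by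
      intro δ hδ
      obtain ⟨l, m, hl, hm, hlm, heq⟩ :=
        exists_weights_rpow_add_rpow_eq hr0 (add_pos_of_nonneg_of_pos hb hδ)
          (add_pos_of_nonneg_of_pos hc hδ)
      refine (Real.rpow_le_rpow_iff (z := 2 / r) (by positivity) (by positivity)
        (by positivity)).1 ?_
      calc (a ^ r) ^ (2 / r) = a ^ 2 := rpow_rpow_two_div hr0.ne' ha
        _ ≤ l ^ (1 - 2 / r) * b ^ 2 + m ^ (1 - 2 / r) * c ^ 2 := h l m hl hm hlm
        _ ≤ l ^ (1 - 2 / r) * (b + δ) ^ 2 + m ^ (1 - 2 / r) * (c + δ) ^ 2 := by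
          gcongr <;> linarith
        _ = _ := heq
    have h_cont : Continuous fun δ : ℝ => (b + δ) ^ r + (c + δ) ^ r :=
      ((continuous_const.add continuous_id).rpow_const fun _ => Or.inr hr0.le).add
        ((continuous_const.add continuous_id).rpow_const fun _ => Or.inr hr0.le)
    have h_lim : Tendsto (fun δ : ℝ => (b + δ) ^ r + (c + δ) ^ r) (𝓝[>] 0)
        (𝓝 (b ^ r + c ^ r)) := by
      simpa only [add_zero] using (h_cont.tendsto 0).mono_left nhdsWithin_le_nhds
    exact ge_of_tendsto h_lim (eventually_mem_nhdsWithin.mono h_perturbed)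

variable {X : Type*} [AddCommGroup X] [Module ℝ X] {r : ℝ} {q : X → ℝ}

lemma RNormOn.isRSeminorm (Q : RNormOn X r) : IsRSeminorm r Q.q :=
  ⟨Q.nonneg, Q.smul_eq, Q.rtri⟩

lemma smul_eq_abs_mul_of_smul_le (h : ∀ (c : ℝ) (x : X), q (c • x) ≤ |c| * q x)
    (hq : ∀ x, 0 ≤ q x) (c : ℝ) (x : X) : q (c • x) = |c| * q x := by
  refine (h c x).antisymm ?_
  rcases eq_or_ne c 0 with rfl | hc
  · simpa using hq 0
  · calc |c| * q x = |c| * q (c⁻¹ • c • x) := by rw [inv_smul_smul₀ hc]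
      _ ≤ |c| * (|c⁻¹| * q (c • x)) := by gcongr; exact h _ _
      _ = q (c • x) := by rw [abs_inv, mul_inv_cancel_left₀ (abs_ne_zero.2 hc)]

namespace IsRSeminorm

lemma map_zero (hq : IsRSeminorm r q) : q 0 = 0 := by
  simpa using hq.smul 0 0

lemma add_sq_le (hr0 : 0 < r) (hr2 : r ≤ 2) (hq : IsRSeminorm r q) {l m : ℝ} (hl : 0 < l)
    (hm : 0 < m) (hlm : l + m = 1) (x y : X) :
    q (x + y) ^ 2 ≤ l ^ (1 - 2 / r) * q x ^ 2 + m ^ (1 - 2 / r) * q y ^ 2 :=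
  (rpow_le_rpow_add_rpow_iff_forall_weights hr0 hr2 (hq.nonneg _) (hq.nonneg _) (hq.nonneg _)).1
    (hq.add_rpow_le x y) l m hl hm hlm

lemma of_add_sq_le (hr0 : 0 < r) (hr2 : r ≤ 2) (hq : ∀ x, 0 ≤ q x)
    (hsmul : ∀ (c : ℝ) (x : X), q (c • x) = |c| * q x)
    (hadd : ∀ l m : ℝ, 0 < l → 0 < m → l + m = 1 → ∀ x y,
      q (x + y) ^ 2 ≤ l ^ (1 - 2 / r) * q x ^ 2 + m ^ (1 - 2 / r) * q y ^ 2) :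
    IsRSeminorm r q where
  nonneg := hq
  smul := hsmul
  add_rpow_le x y := (rpow_le_rpow_add_rpow_iff_forall_weights hr0 hr2 (hq _) (hq _) (hq _)).2
    fun l m hl hm hlm => hadd l m hl hm hlm x y

lemma sum_rpow_le (hr : 0 < r) (hq : IsRSeminorm r q) {ι : Type*} (s : Finset ι) (x : ι → X) :
    q (∑ i ∈ s, x i) ^ r ≤ ∑ i ∈ s, q (x i) ^ r :=
  Finset.le_sum_of_subadditive (fun x => q x ^ r)
    (by simp only [hq.map_zero, Real.zero_rpow hr.ne', le_refl]) hq.add_rpow_le s x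

lemma sum_sq_le (hr0 : 0 < r) (hr2 : r ≤ 2) (hq : IsRSeminorm r q) {ι : Type*} (s : Finset ι)
    (x : ι → X) : q (∑ i ∈ s, x i) ^ 2 ≤ (s.card : ℝ) ^ (2 / r - 1) * ∑ i ∈ s, q (x i) ^ 2 := by
  calc q (∑ i ∈ s, x i) ^ 2 = (q (∑ i ∈ s, x i) ^ r) ^ (2 / r) := 
      (rpow_rpow_two_div hr0.ne' (hq.nonneg _)).symm
    _ ≤ (∑ i ∈ s, q (x i) ^ r) ^ (2 / r) :=
      Real.rpow_le_rpow (Real.rpow_nonneg (hq.nonneg _) r) (hq.sum_rpow_le hr0 s x) (by positivity)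
    _ ≤ (s.card : ℝ) ^ (2 / r - 1) * ∑ i ∈ s, (q (x i) ^ r) ^ (2 / r) :=
      Real.rpow_sum_le_const_mul_sum_rpow_of_nonneg s ((one_le_div₀ hr0).2 hr2)
        fun i _ => Real.rpow_nonneg (hq.nonneg _) r
    _ = _ := by simp only [rpow_rpow_two_div hr0.ne' (hq.nonneg _)]

end IsRSeminorm

end RSeminorm

section KFunctional

variable {X : Type*} [AddCommGroup X] {q0 q1 : X → ℝ}

lemma K2fn_nonneg (t : ℝ) (x : X) : 0 ≤ K2fn q0 q1 t x := by
  refine Real.sInf_nonneg ?_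
  rintro c ⟨x0, x1, -, rfl⟩
  exact Real.sqrt_nonneg _

lemma K2fn_add_le (t : ℝ) (x0 x1 : X) :
    K2fn q0 q1 t (x0 + x1) ≤ √(q0 x0 ^ 2 + t ^ 2 * q1 x1 ^ 2) := by
  refine csInf_le ⟨0, ?_⟩ ⟨x0, x1, rfl, rfl⟩
  rintro c ⟨y0, y1, -, rfl⟩
  exact Real.sqrt_nonneg _

lemma K2fn_add_sq_le (t : ℝ) (x0 x1 : X) :
    K2fn q0 q1 t (x0 + x1) ^ 2 ≤ q0 x0 ^ 2 + t ^ 2 * q1 x1 ^ 2 :=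
  (Real.le_sqrt (K2fn_nonneg t _) (by positivity)).1 (K2fn_add_le t x0 x1)

lemma exists_seq_tendsto_K2fn_sq (q0 q1 : X → ℝ) (t : ℝ) (x : X) :
    ∃ y z : ℕ → X, (∀ k, x = y k + z k) ∧
      Tendsto (fun k => q0 (y k) ^ 2 + t ^ 2 * q1 (z k) ^ 2) atTop (𝓝 (K2fn q0 q1 t x ^ 2)) := by
  let S := {c | ∃ x0 x1, x = x0 + x1 ∧ c = √(q0 x0 ^ 2 + t ^ 2 * q1 x1 ^ 2)}
  have hne : S.Nonempty := ⟨_, x, 0, (add_zero x).symm, rfl⟩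
  have hbdd : BddBelow S := ⟨0, by rintro c ⟨x0, x1, -, rfl⟩; exact Real.sqrt_nonneg _⟩
  obtain ⟨u, -, hu, huS⟩ := exists_seq_tendsto_sInf hne hbdd
  choose y z hyz huyz using huS
  refine ⟨y, z, hyz, (hu.pow 2).congr fun k => ?_⟩
  rw [huyz, Real.sq_sqrt (by positivity)]

lemma K2fn_monotoneOn (q0 q1 : X → ℝ) (x : X) :
    MonotoneOn (fun t => K2fn q0 q1 t x) (Set.Ici 0) := by
  intro s hs t _ hst
  have hs : 0 ≤ s := hs
  refine le_csInf ⟨_, x, 0, (add_zero x).symm, rfl⟩ ?_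
  rintro c ⟨x0, x1, rfl, rfl⟩
  refine (K2fn_add_le s x0 x1).trans (Real.sqrt_le_sqrt ?_)
  gcongr

variable [Module ℝ X] {r : ℝ}

lemma K2fn_smul (h0 : IsRSeminorm r q0) (h1 : IsRSeminorm r q1) (t c : ℝ) (x : X) :
    K2fn q0 q1 t (c • x) = |c| * K2fn q0 q1 t x := by
  refine smul_eq_abs_mul_of_smul_le (fun c x => ?_) (K2fn_nonneg t) c x
  obtain ⟨y, z, hyz, hlim⟩ := exists_seq_tendsto_K2fn_sq q0 q1 t x
  refine (sq_le_sq₀ (K2fn_nonneg t _) (mul_nonneg (abs_nonneg c) (K2fn_nonneg t x))).1 ?_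
  rw [mul_pow]
  refine ge_of_tendsto' (hlim.const_mul _) fun k => ?_
  calc K2fn q0 q1 t (c • x) ^ 2 ≤ q0 (c • y k) ^ 2 + t ^ 2 * q1 (c • z k) ^ 2 := by
        rw [hyz k, smul_add]; exact K2fn_add_sq_le t _ _
    _ = |c| ^ 2 * (q0 (y k) ^ 2 + t ^ 2 * q1 (z k) ^ 2) := by rw [h0.smul, h1.smul]; ring

lemma isRSeminorm_K2fn (hr0 : 0 < r) (hr2 : r ≤ 2) (h0 : IsRSeminorm r q0)
    (h1 : IsRSeminorm r q1) (t : ℝ) : IsRSeminorm r (K2fn q0 q1 t) := by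
  refine .of_add_sq_le hr0 hr2 (K2fn_nonneg t) (K2fn_smul h0 h1 t) fun l m hl hm hlm x x' => ?_
  obtain ⟨y, z, hyz, hlim⟩ := exists_seq_tendsto_K2fn_sq q0 q1 t x
  obtain ⟨y', z', hyz', hlim'⟩ := exists_seq_tendsto_K2fn_sq q0 q1 t x'
  refine ge_of_tendsto' ((hlim.const_mul _).add (hlim'.const_mul _)) fun k => ?_
  calc _ ≤ q0 (y k + y' k) ^ 2 + t ^ 2 * q1 (z k + z' k) ^ 2 := by
        rw [hyz k, hyz' k, add_add_add_comm]; exact K2fn_add_sq_le t _ _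
    _ ≤ (l ^ (1 - 2 / r) * q0 (y k) ^ 2 + m ^ (1 - 2 / r) * q0 (y' k) ^ 2) +
        t ^ 2 * (l ^ (1 - 2 / r) * q1 (z k) ^ 2 + m ^ (1 - 2 / r) * q1 (z' k) ^ 2) := by
      gcongr
      · exact h0.add_sq_le hr0 hr2 hl hm hlm _ _
      · exact h1.add_sq_le hr0 hr2 hl hm hlm _ _
    _ = _ := by ring

end KFunctional

section InterpolationNorm

lemma integrableOn_Ioi_div_rpow_of_le {f : ℝ → ℝ} {A B θ : ℝ} (hθ0 : 0 < θ) (hθ1 : θ < 1)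
    (hf : AEMeasurable f (volume.restrict (Set.Ioi 0))) (hf0 : ∀ t, 0 ≤ f t)
    (hfA : ∀ t, f t ≤ A) (hfB : ∀ t, f t ≤ t ^ 2 * B) :
    IntegrableOn (fun t => f t / t ^ (1 + 2 * θ)) (Set.Ioi 0) := by
  have hmeas : AEMeasurable (fun t => f t / t ^ (1 + 2 * θ)) (volume.restrict (Set.Ioi 0)) :=
    hf.div (measurable_id.pow_const _).aemeasurable
  have hnorm : ∀ t : ℝ, 0 < t → ‖f t / t ^ (1 + 2 * θ)‖ = f t / t ^ (1 + 2 * θ) := fun t ht =>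
    Real.norm_of_nonneg (div_nonneg (hf0 t) (by positivity))
  rw [← Set.Ioc_union_Ioi_eq_Ioi (zero_le_one (α := ℝ))]
  refine IntegrableOn.union ?_ ?_
  · have hdom : IntegrableOn (fun t : ℝ => t ^ (1 - 2 * θ) * B) (Set.Ioc 0 1) :=
      ((intervalIntegrable_iff_integrableOn_Ioc_of_le zero_le_one).1
        (intervalIntegral.intervalIntegrable_rpow' (by linarith))).mul_const B
    refine hdom.mono' (hmeas.mono_set Set.Ioc_subset_Ioi_self).aestronglyMeasurable ?_
    filter_upwards [ae_restrict_mem measurableSet_Ioc] with t ht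
    rw [hnorm t ht.1, div_le_iff₀ (Real.rpow_pos_of_pos ht.1 _), mul_right_comm,
      ← Real.rpow_add ht.1, show 1 - 2 * θ + (1 + 2 * θ) = 2 by ring, Real.rpow_two]
    exact hfB t
  · have hdom : IntegrableOn (fun t : ℝ => A * t ^ (-1 - 2 * θ)) (Set.Ioi 1) :=
      (integrableOn_Ioi_rpow_of_lt (by linarith) zero_lt_one).const_mul A
    refine hdom.mono'
      (hmeas.mono_set (Set.Ioi_subset_Ioi zero_le_one)).aestronglyMeasurable ?_
    filter_upwards [ae_restrict_mem measurableSet_Ioi] with t ht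
    have ht0 : 0 < t := zero_lt_one.trans ht
    rw [hnorm t ht0, div_le_iff₀ (Real.rpow_pos_of_pos ht0 _), mul_assoc, ← Real.rpow_add ht0,
      show -1 - 2 * θ + (1 + 2 * θ) = 0 by ring, Real.rpow_zero, mul_one]
    exact hfA t

lemma comp_mul_right_div_rpow_eq (f : ℝ → ℝ) (α : ℝ) {s t : ℝ} (hs : 0 < s) (ht : 0 < t) :
    f (t * s) / t ^ α = s ^ α * (f (t * s) / (t * s) ^ α) := by
  rw [Real.mul_rpow ht.le hs.le]
  field_simp

lemma integrableOn_comp_mul_right_div_rpow {f : ℝ → ℝ} {α s : ℝ} (hs : 0 < s)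
    (hf : IntegrableOn (fun t => f t / t ^ α) (Set.Ioi 0)) :
    IntegrableOn (fun t => f (t * s) / t ^ α) (Set.Ioi 0) := by
  refine (integrableOn_congr_fun (fun t ht => comp_mul_right_div_rpow_eq f α hs ht)
    measurableSet_Ioi).2 (Integrable.const_mul ?_ _)
  exact (integrableOn_Ioi_comp_mul_right_iff (fun t => f t / t ^ α) 0 hs).2 (by rwa [zero_mul])

lemma integral_comp_mul_right_div_rpow (f : ℝ → ℝ) (α : ℝ) {s : ℝ} (hs : 0 < s) :
    ∫ t in Set.Ioi 0, f (t * s) / t ^ α = s ^ (α - 1) * ∫ t in Set.Ioi 0, f t / t ^ α := by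
  rw [setIntegral_congr_fun measurableSet_Ioi fun t ht => comp_mul_right_div_rpow_eq f α hs ht,
    integral_const_mul, integral_comp_mul_right_Ioi (fun t => f t / t ^ α) 0 hs, zero_mul,
    smul_eq_mul, Real.rpow_sub_one hs.ne']
  ring

variable {X : Type*} [AddCommGroup X] {q0 q1 : X → ℝ} {θ : ℝ}

lemma thetaNorm_nonneg (θ : ℝ) (x : X) : 0 ≤ thetaNorm q0 q1 θ x :=
  mul_nonneg (Real.sqrt_nonneg _) (Real.sqrt_nonneg _)

lemma thetaNorm_sq (hθ0 : 0 < θ) (hθ1 : θ < 1) (x : X) :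
    thetaNorm q0 q1 θ x ^ 2 =
      θ * (1 - θ) * ∫ t in Set.Ioi (0 : ℝ), K2fn q0 q1 t x ^ 2 / t ^ (1 + 2 * θ) := by
  have hint : 0 ≤ ∫ t in Set.Ioi (0 : ℝ), K2fn q0 q1 t x ^ 2 / t ^ (1 + 2 * θ) :=
    setIntegral_nonneg measurableSet_Ioi fun t ht =>
      div_nonneg (sq_nonneg _) (Real.rpow_nonneg (le_of_lt ht) _)
  rw [thetaNorm, mul_pow, Real.sq_sqrt (mul_nonneg hθ0.le (sub_nonneg.2 hθ1.le)),
    Real.sq_sqrt hint]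

variable [Module ℝ X] {r : ℝ}

lemma integrableOn_K2fn_sq_div_rpow (h0 : IsRSeminorm r q0) (h1 : IsRSeminorm r q1)
    (hθ0 : 0 < θ) (hθ1 : θ < 1) (x : X) :
    IntegrableOn (fun t => K2fn q0 q1 t x ^ 2 / t ^ (1 + 2 * θ)) (Set.Ioi 0) := by
  have hmono : MonotoneOn (fun t => K2fn q0 q1 t x) (Set.Ioi 0) :=
    (K2fn_monotoneOn q0 q1 x).mono Set.Ioi_subset_Ici_self
  refine integrableOn_Ioi_div_rpow_of_le (A := q0 x ^ 2) (B := q1 x ^ 2) hθ0 hθ1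
    ((aemeasurable_restrict_of_monotoneOn measurableSet_Ioi hmono).pow_const 2)
    (fun t => sq_nonneg _) (fun t => ?_) (fun t => ?_)
  · simpa [h1.map_zero] using K2fn_add_sq_le (q0 := q0) (q1 := q1) t x 0
  · simpa [h0.map_zero] using K2fn_add_sq_le (q0 := q0) (q1 := q1) t 0 x

lemma thetaNorm_smul (h0 : IsRSeminorm r q0) (h1 : IsRSeminorm r q1) (hθ0 : 0 < θ)
    (hθ1 : θ < 1) (c : ℝ) (x : X) :
    thetaNorm q0 q1 θ (c • x) = |c| * thetaNorm q0 q1 θ x := by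
  refine (sq_eq_sq₀ (thetaNorm_nonneg θ _) (mul_nonneg (abs_nonneg c) (thetaNorm_nonneg θ x))).1 ?_
  simp only [mul_pow, thetaNorm_sq hθ0 hθ1, K2fn_smul h0 h1, mul_div_assoc, integral_const_mul]
  ring

lemma isRSeminorm_thetaNorm (hr0 : 0 < r) (hr2 : r ≤ 2) (h0 : IsRSeminorm r q0)
    (h1 : IsRSeminorm r q1) (hθ0 : 0 < θ) (hθ1 : θ < 1) : IsRSeminorm r (thetaNorm q0 q1 θ) := by
  refine .of_add_sq_le hr0 hr2 (thetaNorm_nonneg θ) (thetaNorm_smul h0 h1 hθ0 hθ1)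
    fun l m hl hm hlm x y => ?_
  have hint := integrableOn_K2fn_sq_div_rpow h0 h1 hθ0 hθ1
  simp only [thetaNorm_sq hθ0 hθ1]
  rw [mul_left_comm (l ^ _), mul_left_comm (m ^ _), ← mul_add,
    ← integral_const_mul (l ^ (1 - 2 / r)), ← integral_const_mul (m ^ (1 - 2 / r)),
    ← integral_add ((hint x).const_mul _) ((hint y).const_mul _)]
  refine mul_le_mul_of_nonneg_left ?_ (mul_nonneg hθ0.le (sub_nonneg.2 hθ1.le))
  refine setIntegral_mono_on (hint _) (((hint x).const_mul _).add ((hint y).const_mul _))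
    measurableSet_Ioi fun t ht => ?_
  rw [← mul_div_assoc, ← mul_div_assoc, ← add_div]
  exact div_le_div_of_nonneg_right
    ((isRSeminorm_K2fn hr0 hr2 h0 h1 t).add_sq_le hr0 hr2 hl hm hlm x y)
    (Real.rpow_nonneg (le_of_lt ht) _)

end InterpolationNorm

section SignAverages

variable {X : Type*} [AddCommGroup X] [Module ℝ X] {r : ℝ} {q q0 q1 : X → ℝ} {n : ℕ}

/-- The type 2 inequality with constant `C` restricted to families of `n` vectors: the map
`x ↦ ∑ i, ε i • x i` from `ℓ₂ⁿ(X)` to `L₂({-1, 1}ⁿ; X)` has norm at most `C`. -/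
def Type2BoundOn (q : X → ℝ) (n : ℕ) (C : ℝ) : Prop :=
  ∀ x : Fin n → X,
    𝔼 ε : Fin n → Bool, q (∑ i, rsign (ε i) • x i) ^ 2 ≤ C ^ 2 * ∑ i, q (x i) ^ 2

lemma radAvg_two_eq_sqrt (q : X → ℝ) (x : Fin n → X) :
    radAvg q 2 x = √(𝔼 ε : Fin n → Bool, q (∑ i, rsign (ε i) • x i) ^ 2) := by
  rw [radAvg, ← Real.sqrt_eq_rpow, Fintype.expect_eq_sum_div_card, div_eq_inv_mul,
    Fintype.card_fun, Fintype.card_bool, Fintype.card_fin, Nat.cast_pow, Nat.cast_ofNat]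
  simp only [Real.rpow_two]

lemma Type2ConstLe.type2BoundOn {a : ℝ} (ha : 0 ≤ a) (h : Type2ConstLe q a) (n : ℕ) :
    Type2BoundOn q n a := by
  intro x
  have hx := h n x
  rw [radAvg_two_eq_sqrt, ← Real.sqrt_eq_rpow] at hx
  simp only [Real.rpow_two] at hx
  rwa [Real.sqrt_le_left (by positivity), mul_pow, Real.sq_sqrt (by positivity)] at hx

lemma abs_rsign (b : Bool) : |rsign b| = 1 := by
  cases b <;> simp [rsign]

lemma IsRSeminorm.type2BoundOn (hr0 : 0 < r) (hr2 : r ≤ 2) (hq : IsRSeminorm r q) (n : ℕ) :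
    Type2BoundOn q n ((n : ℝ) ^ (1 / r - 1 / 2)) := by
  intro x
  refine Finset.expect_le Finset.univ_nonempty fun ε _ => ?_
  have hconst : ((n : ℝ) ^ (1 / r - 1 / 2)) ^ 2 = (n : ℝ) ^ (2 / r - 1) := by
    rw [← Real.rpow_two, ← Real.rpow_mul n.cast_nonneg]
    ring_nf
  rw [hconst]
  simpa only [hq.smul, abs_rsign, one_mul, Finset.card_univ, Fintype.card_fin] using
    hq.sum_sq_le hr0 hr2 Finset.univ fun i => rsign (ε i) • x i

lemma Type2BoundOn.expect_K2fn_sq_le {A B : ℝ} (h0 : Type2BoundOn q0 n A)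
    (h1 : Type2BoundOn q1 n B) (hA : A ≠ 0) (x : Fin n → X) (t : ℝ) :
    𝔼 ε : Fin n → Bool, K2fn q0 q1 t (∑ i, rsign (ε i) • x i) ^ 2 ≤
      A ^ 2 * ∑ i, K2fn q0 q1 (t * (B / A)) (x i) ^ 2 := by
  choose y z hyz hlim using fun i => exists_seq_tendsto_K2fn_sq q0 q1 (t * (B / A)) (x i)
  refine ge_of_tendsto' ((tendsto_finsetSum _ fun i _ => hlim i).const_mul (A ^ 2)) fun k => ?_
  have hsplit : ∀ ε : Fin n → Bool, ∑ i, rsign (ε i) • x i =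
      ∑ i, rsign (ε i) • y i k + ∑ i, rsign (ε i) • z i k := fun ε => by
    simp only [← Finset.sum_add_distrib, ← smul_add, ← hyz]
  calc 𝔼 ε : Fin n → Bool, K2fn q0 q1 t (∑ i, rsign (ε i) • x i) ^ 2
      ≤ 𝔼 ε : Fin n → Bool, (q0 (∑ i, rsign (ε i) • y i k) ^ 2 +
          t ^ 2 * q1 (∑ i, rsign (ε i) • z i k) ^ 2) :=
        Finset.expect_le_expect fun ε _ => by rw [hsplit]; exact K2fn_add_sq_le t _ _
    _ = 𝔼 ε : Fin n → Bool, q0 (∑ i, rsign (ε i) • y i k) ^ 2 +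
          t ^ 2 * 𝔼 ε : Fin n → Bool, q1 (∑ i, rsign (ε i) • z i k) ^ 2 := by
        rw [Finset.expect_add_distrib, Finset.mul_expect]
    _ ≤ A ^ 2 * ∑ i, q0 (y i k) ^ 2 + t ^ 2 * (B ^ 2 * ∑ i, q1 (z i k) ^ 2) := by
        gcongr
        · exact h0 _
        · exact h1 _
    _ = A ^ 2 * ∑ i, (q0 (y i k) ^ 2 + (t * (B / A)) ^ 2 * q1 (z i k) ^ 2) := by
        rw [Finset.sum_add_distrib, ← Finset.mul_sum]
        field_simp

lemma integral_expect {α ι : Type*} [MeasurableSpace α] {μ : Measure α} [Fintype ι]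
    {f : ι → α → ℝ} (hf : ∀ i, Integrable (f i) μ) :
    ∫ a, 𝔼 i, f i a ∂μ = 𝔼 i, ∫ a, f i a ∂μ := by
  simp only [Fintype.expect_eq_sum_div_card, integral_div,
    integral_finsetSum _ fun i _ => hf i]

lemma sq_mul_div_rpow_eq {A B : ℝ} (hA : 0 < A) (hB : 0 < B) (θ : ℝ) :
    A ^ 2 * (B / A) ^ (2 * θ) = (A ^ (1 - θ) * B ^ θ) ^ 2 := by
  rw [mul_comm 2 θ, Real.rpow_mul (by positivity), Real.rpow_two, ← mul_pow,
    Real.div_rpow hB.le hA.le, Real.rpow_sub hA, Real.rpow_one]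
  ring

-- Interpolation of operators, applied to the map `x ↦ ∑ i, ε i • x i`.
lemma Type2BoundOn.thetaNorm {A B θ : ℝ} (hq0 : IsRSeminorm r q0) (hq1 : IsRSeminorm r q1)
    (h0 : Type2BoundOn q0 n A) (h1 : Type2BoundOn q1 n B) (hA : 0 < A) (hB : 0 < B)
    (hθ0 : 0 < θ) (hθ1 : θ < 1) :
    Type2BoundOn (thetaNorm q0 q1 θ) n (A ^ (1 - θ) * B ^ θ) := by
  intro x
  have hint := integrableOn_K2fn_sq_div_rpow hq0 hq1 hθ0 hθ1
  have hint_scaled := fun z =>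
    integrableOn_comp_mul_right_div_rpow (f := fun t => K2fn q0 q1 t z ^ 2)
      (div_pos hB hA) (hint z)
  simp only [thetaNorm_sq hθ0 hθ1]
  rw [← Finset.mul_expect, ← Finset.mul_sum, mul_left_comm]
  refine mul_le_mul_of_nonneg_left ?_ (mul_nonneg hθ0.le (sub_nonneg.2 hθ1.le))
  calc 𝔼 ε : Fin n → Bool, ∫ t in Set.Ioi (0 : ℝ),
        K2fn q0 q1 t (∑ i, rsign (ε i) • x i) ^ 2 / t ^ (1 + 2 * θ)
      = ∫ t in Set.Ioi (0 : ℝ), 𝔼 ε : Fin n → Bool,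
          K2fn q0 q1 t (∑ i, rsign (ε i) • x i) ^ 2 / t ^ (1 + 2 * θ) :=
        (integral_expect fun ε => hint _).symm
    _ ≤ ∫ t in Set.Ioi (0 : ℝ),
          A ^ 2 * ∑ i, K2fn q0 q1 (t * (B / A)) (x i) ^ 2 / t ^ (1 + 2 * θ) := by
        refine setIntegral_mono_on ?_ ((integrable_finsetSum _ fun i _ =>
          hint_scaled (x i)).const_mul _) measurableSet_Ioi fun t ht => ?_
        · simp only [Fintype.expect_eq_sum_div_card]
          exact (integrable_finsetSum _ fun ε _ => hint _).div_const _
        · rw [← Finset.expect_div, ← Finset.sum_div, ← mul_div_assoc]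
          exact div_le_div_of_nonneg_right (h0.expect_K2fn_sq_le h1 hA.ne' x t)
            (Real.rpow_nonneg (le_of_lt ht) _)
    _ = A ^ 2 * ((B / A) ^ (2 * θ) *
          ∑ i, ∫ t in Set.Ioi (0 : ℝ), K2fn q0 q1 t (x i) ^ 2 / t ^ (1 + 2 * θ)) := by
        rw [integral_const_mul, integral_finsetSum _ fun i _ => hint_scaled (x i),
          Finset.mul_sum _ _ ((B / A) ^ (2 * θ))]
        congr 1
        refine Finset.sum_congr rfl fun i _ => ?_
        rw [integral_comp_mul_right_div_rpow (fun t => K2fn q0 q1 t (x i) ^ 2) (1 + 2 * θ)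
          (div_pos hB hA), add_sub_cancel_left]
    _ = _ := by rw [← mul_assoc, sq_mul_div_rpow_eq hA hB]

end SignAverages

section EnvelopeBound

variable {X : Type*} [AddCommGroup X] [Module ℝ X] {r β C : ℝ} {q : X → ℝ}

/-- Equal-norm infratype `p` of `q` with constant `C`, where `β = 1 / p`: any `n` vectors of the
unit ball have a signed sum of size at most `C * n ^ (1 / p)`. -/
def EqualNormInfratype (q : X → ℝ) (β C : ℝ) : Prop :=
  ∀ (n : ℕ) (x : Fin n → X), (∀ i, q (x i) ≤ 1) →
    ∃ ε : Fin n → Bool, q (∑ i, rsign (ε i) • x i) ≤ C * (n : ℝ) ^ β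

lemma equalNormInfratype_of_type2BoundOn {γ : ℝ} (hq : ∀ x, 0 ≤ q x) (hC : 0 ≤ C)
    (h : ∀ n : ℕ, Type2BoundOn q n (C * (n : ℝ) ^ γ)) (hγ : 1 / 2 + γ ≠ 0) :
    EqualNormInfratype q (1 / 2 + γ) C := by
  intro n x hx
  obtain ⟨ε, -, hε⟩ := Finset.exists_le_of_expect_le Finset.univ_nonempty (h n x)
  refine ⟨ε, (sq_le_sq₀ (hq _) (by positivity)).1 (hε.trans ?_)⟩
  calc (C * (n : ℝ) ^ γ) ^ 2 * ∑ i, q (x i) ^ 2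
      ≤ (C * (n : ℝ) ^ γ) ^ 2 * ∑ _i : Fin n, 1 := by
        gcongr with i
        exact pow_le_one₀ (hq _) (hx i)
    _ = (C * (n : ℝ) ^ (1 / 2 + γ)) ^ 2 := by
      rw [Real.rpow_add' n.cast_nonneg hγ, ← Real.sqrt_eq_rpow, mul_left_comm C, mul_pow (√(n : ℝ)),
        Real.sq_sqrt n.cast_nonneg, mul_comm]
      simp only [Finset.sum_const, Finset.card_univ, Fintype.card_fin, nsmul_eq_mul, mul_one]

lemma EqualNormInfratype.exists_signs (h : EqualNormInfratype q β C) {ι : Type*} [Fintype ι]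
    {x : ι → X} (hx : ∀ i, q (x i) ≤ 1) :
    ∃ ε : ι → Bool, q (∑ i, rsign (ε i) • x i) ≤ C * (Fintype.card ι : ℝ) ^ β := by
  let e := Fintype.equivFin ι
  obtain ⟨ε, hε⟩ := h _ (x ∘ e.symm) fun i => hx _
  refine ⟨ε ∘ e, ?_⟩
  rwa [← Equiv.sum_comp e.symm, show (fun i => rsign ((ε ∘ e) (e.symm i)) • x (e.symm i)) =
    fun i => rsign (ε i) • (x ∘ e.symm) i by simp]

lemma EqualNormInfratype.exists_sum_eq_add_two_smul_sum (h : EqualNormInfratype q β C)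
    (hq : IsRSeminorm r q) {ι : Type*} [Fintype ι] {x : ι → X} (hx : ∀ i, q (x i) ≤ 1)
    {N : ℕ} (hN : Fintype.card ι ≤ 2 * N) :
    ∃ (s : Finset ι) (y : X), s.card ≤ N ∧ q y ≤ C * (Fintype.card ι : ℝ) ^ β ∧
      ∑ i, x i = y + (2 : ℝ) • ∑ i ∈ s, x i := by
  obtain ⟨ε, hε⟩ := h.exists_signs hx
  obtain ⟨b, hb⟩ := Fintype.exists_card_fiber_le_of_card_le_mul ε (by simpa using hN)
  refine ⟨Finset.univ.filter (ε · = b), -(rsign b • ∑ i, rsign (ε i) • x i), hb, ?_, ?_⟩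
  · rwa [← neg_smul, hq.smul, abs_neg, abs_rsign, one_mul]
  · rw [Finset.sum_filter, Finset.smul_sum, Finset.smul_sum,
      ← Finset.sum_neg_distrib, ← Finset.sum_add_distrib]
    refine Finset.sum_congr rfl fun i _ => ?_
    cases ε i <;> cases b <;> simp [rsign, two_smul]

lemma rpow_mul_two_rpow_pow_eq (hC : 0 ≤ C) (r β : ℝ) (m : ℕ) :
    C ^ r * ((2 : ℝ) ^ (r * (β - 1))) ^ m =
      (((2 : ℝ) ^ m)⁻¹ * (C * ((2 : ℝ) ^ m) ^ β)) ^ r := by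
  have hscale : (2 : ℝ) ^ (r * (β - 1)) = (2 ^ β / 2) ^ r := by
    rw [mul_comm r, Real.rpow_mul zero_le_two, Real.rpow_sub_one two_ne_zero]
  rw [hscale, Real.rpow_pow_comm (by positivity), ← Real.mul_rpow hC (by positivity), div_pow,
    Real.rpow_pow_comm zero_le_two, mul_left_comm, div_eq_inv_mul]

lemma EqualNormInfratype.dyadic_average_rpow_le (h : EqualNormInfratype q β C) (hr : 0 < r)
    (hq : IsRSeminorm r q) (hβ : 0 ≤ β) (hC : 0 ≤ C) {ι : Type*} [Fintype ι] {x : ι → X}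
    (hx : ∀ i, q (x i) ≤ 1) {m : ℕ} (hι : Fintype.card ι ≤ 2 ^ m) :
    q (((2 : ℝ) ^ m)⁻¹ • ∑ i, x i) ^ r ≤
      1 + C ^ r * ∑ k ∈ Finset.range m, ((2 : ℝ) ^ (r * (β - 1))) ^ (k + 1) := by
  induction m generalizing ι with
  | zero =>
    have hx_rpow : ∀ i, q (x i) ^ r ≤ 1 := fun i =>
      Real.rpow_le_one (hq.nonneg _) (hx i) hr.le
    calc q (((2 : ℝ) ^ 0)⁻¹ • ∑ i, x i) ^ r = q (∑ i, x i) ^ r := by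
          rw [pow_zero, inv_one, one_smul]
      _ ≤ ∑ _i : ι, 1 :=
        (hq.sum_rpow_le hr _ x).trans (Finset.sum_le_sum fun i _ => hx_rpow i)
      _ ≤ _ := by simpa using hι
  | succ m ih =>
    obtain ⟨s, y, hs, hy, hsum⟩ :=
      h.exists_sum_eq_add_two_smul_sum hq hx (N := 2 ^ m) (by rwa [← pow_succ'])
    have h_signed : q (((2 : ℝ) ^ (m + 1))⁻¹ • y) ^ r ≤
        C ^ r * ((2 : ℝ) ^ (r * (β - 1))) ^ (m + 1) := by
      have hcard : (Fintype.card ι : ℝ) ≤ 2 ^ (m + 1) := by exact_mod_cast hι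
      rw [hq.smul, abs_of_nonneg (by positivity), rpow_mul_two_rpow_pow_eq hC]
      gcongr
      · exact mul_nonneg (by positivity) (hq.nonneg _)
      · exact hy.trans (by gcongr)
    have h_minority := ih (x := fun i : s => x i) (fun i => hx i) (by simpa using hs)
    have h_split : ((2 : ℝ) ^ (m + 1))⁻¹ • ∑ i, x i =
        ((2 : ℝ) ^ (m + 1))⁻¹ • y + ((2 : ℝ) ^ m)⁻¹ • ∑ i : s, x i := by
      rw [hsum, smul_add, smul_smul, Finset.sum_coe_sort, pow_succ, mul_inv,
        inv_mul_cancel_right₀ two_ne_zero]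
    rw [h_split, Finset.sum_range_succ, mul_add]
    linarith [hq.add_rpow_le (((2 : ℝ) ^ (m + 1))⁻¹ • y) (((2 : ℝ) ^ m)⁻¹ • ∑ i : s, x i)]

/-- The bound for an `r`-norm of equal-norm infratype `1 / β` with constant `C` in terms of its
Banach envelope norm; the inverse is the sum of a geometric series, which converges for `β < 1`. -/
noncomputable def envelopeConstant (r β C : ℝ) : ℝ :=
  (1 + C ^ r * (1 - (2 : ℝ) ^ (r * (β - 1)))⁻¹) ^ (1 / r)

lemma two_rpow_lt_one (hr : 0 < r) (hβ : β < 1) : (2 : ℝ) ^ (r * (β - 1)) < 1 :=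
  Real.rpow_lt_one_of_one_lt_of_neg one_lt_two (mul_neg_of_pos_of_neg hr (sub_neg.2 hβ))

lemma envelopeConstant_pos (hr : 0 < r) (hβ : β < 1) (hC : 0 ≤ C) : 0 < envelopeConstant r β C := by
  have := sub_pos.2 (two_rpow_lt_one hr hβ)
  unfold envelopeConstant
  positivity

lemma EqualNormInfratype.dyadic_average_le (h : EqualNormInfratype q β C) (hr : 0 < r)
    (hq : IsRSeminorm r q) (hβ0 : 0 ≤ β) (hβ1 : β < 1) (hC : 0 ≤ C) {ι : Type*} [Fintype ι]
    {x : ι → X} (hx : ∀ i, q (x i) ≤ 1) {m : ℕ} (hι : Fintype.card ι ≤ 2 ^ m) :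
    q (((2 : ℝ) ^ m)⁻¹ • ∑ i, x i) ≤ envelopeConstant r β C := by
  set ρ := (2 : ℝ) ^ (r * (β - 1))
  have hρ0 : 0 < ρ := by positivity
  have hρ1 : ρ < 1 := two_rpow_lt_one hr hβ1
  have h_geom : ∑ k ∈ Finset.range m, ρ ^ (k + 1) ≤ (1 - ρ)⁻¹ :=
    calc ∑ k ∈ Finset.range m, ρ ^ (k + 1) ≤ ∑ k ∈ Finset.range m, ρ ^ k :=
          Finset.sum_le_sum fun k _ => pow_le_pow_of_le_one hρ0.le hρ1.le k.le_succ
      _ ≤ ∑' k, ρ ^ k := (summable_geometric_of_lt_one hρ0.le hρ1).sum_le_tsum _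
          fun _ _ => by positivity
      _ = (1 - ρ)⁻¹ := tsum_geometric_of_lt_one hρ0.le hρ1
  have h_bound_nonneg : 0 ≤ 1 + C ^ r * (1 - ρ)⁻¹ :=
    add_nonneg zero_le_one (mul_nonneg (by positivity) (inv_nonneg.2 (sub_nonneg.2 hρ1.le)))
  rw [envelopeConstant, one_div, Real.le_rpow_inv_iff_of_pos (hq.nonneg _) h_bound_nonneg hr]
  exact (h.dyadic_average_rpow_le hr hq hβ0 hC hx hι).trans (by gcongr)

lemma EqualNormInfratype.sum_dyadic_smul_le (h : EqualNormInfratype q β C) (hr : 0 < r)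
    (hq : IsRSeminorm r q) (hβ0 : 0 ≤ β) (hβ1 : β < 1) (hC : 0 ≤ C) {ι : Type*} [Fintype ι]
    {x : ι → X} (hx : ∀ i, q (x i) ≤ 1) {m : ℕ} {k : ι → ℕ} (hk : ∑ i, k i ≤ 2 ^ m) :
    q (∑ i, ((k i : ℝ) / 2 ^ m) • x i) ≤ envelopeConstant r β C := by
  have hrepeat := h.dyadic_average_le hr hq hβ0 hβ1 hC (x := fun p : Σ i, Fin (k i) => x p.1)
    (fun p => hx p.1) (m := m) (by simpa using hk)
  have hsum : ∑ i, ((k i : ℝ) / 2 ^ m) • x i =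
      ((2 : ℝ) ^ m)⁻¹ • ∑ p : Σ i, Fin (k i), x p.1 := by
    simp only [Fintype.sum_sigma, Finset.sum_const, Finset.card_univ, Fintype.card_fin,
      Finset.smul_sum, ← Nat.cast_smul_eq_nsmul ℝ, smul_smul, div_eq_inv_mul]
  rwa [hsum]

lemma IsRSeminorm.sum_smul_le_of_tendsto (hr : 0 < r) (hq : IsRSeminorm r q) {ι : Type*}
    [Fintype ι] (x : ι → X) {v : ℕ → ι → ℝ} {w : ι → ℝ} {M : ℝ}
    (hv : ∀ i, Tendsto (fun m => v m i) atTop (𝓝 (w i))) (hM : ∀ m, q (∑ i, v m i • x i) ≤ M) :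
    q (∑ i, w i • x i) ≤ M := by
  have hM0 : 0 ≤ M := (hq.nonneg _).trans (hM 0)
  have herror : Tendsto (fun m => M ^ r + ∑ i, (|w i - v m i| * q (x i)) ^ r) atTop
      (𝓝 (M ^ r)) := by
    have hterm : ∀ i, Tendsto (fun m => (|w i - v m i| * q (x i)) ^ r) atTop (𝓝 0) := fun i => by
      simpa [Real.zero_rpow hr.ne'] using
        (((tendsto_const_nhds (x := w i)).sub (hv i)).abs.mul_const (q (x i))).rpow_const
          (Or.inr hr.le)
    simpa using (tendsto_finsetSum Finset.univ fun i _ => hterm i).const_add (M ^ r)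
  refine (Real.rpow_le_rpow_iff (hq.nonneg _) hM0 hr).1 (ge_of_tendsto' herror fun m => ?_)
  calc q (∑ i, w i • x i) ^ r = q (∑ i, v m i • x i + ∑ i, (w i - v m i) • x i) ^ r := by
        rw [← Finset.sum_add_distrib]
        simp only [← add_smul, add_sub_cancel]
    _ ≤ q (∑ i, v m i • x i) ^ r + ∑ i, q ((w i - v m i) • x i) ^ r :=
      (hq.add_rpow_le _ _).trans (by gcongr; exact hq.sum_rpow_le hr _ _)
    _ ≤ M ^ r + ∑ i, (|w i - v m i| * q (x i)) ^ r := by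
      simp only [hq.smul]
      gcongr
      · exact hq.nonneg _
      · exact hM m

lemma EqualNormInfratype.le_of_mem_convexHull (h : EqualNormInfratype q β C) (hr : 0 < r)
    (hq : IsRSeminorm r q) (hβ0 : 0 ≤ β) (hβ1 : β < 1) (hC : 0 ≤ C) {x : X}
    (hx : x ∈ convexHull ℝ {x | q x ≤ 1}) : q x ≤ envelopeConstant r β C := by
  obtain ⟨ι, _, w, z, hw0, hw1, hz, rfl⟩ := mem_convexHull_iff_exists_fintype.1 hx
  have hpow : Tendsto (fun m : ℕ => (2 : ℝ) ^ m) atTop atTop :=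
    tendsto_pow_atTop_atTop_of_one_lt one_lt_two
  refine hq.sum_smul_le_of_tendsto hr z (v := fun m i => (⌊w i * 2 ^ m⌋₊ : ℝ) / 2 ^ m)
    (fun i => (tendsto_nat_floor_mul_div_atTop (hw0 i)).comp hpow) fun m =>
      h.sum_dyadic_smul_le hr hq hβ0 hβ1 hC hz ?_
  have hfloor : ((∑ i, ⌊w i * 2 ^ m⌋₊ : ℕ) : ℝ) ≤ 2 ^ m :=
    calc ((∑ i, ⌊w i * 2 ^ m⌋₊ : ℕ) : ℝ) ≤ ∑ i, w i * 2 ^ m := by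
          push_cast
          exact Finset.sum_le_sum fun i _ => Nat.floor_le (mul_nonneg (hw0 i) (by positivity))
      _ = 2 ^ m := by rw [← Finset.sum_mul, hw1, one_mul]
  exact_mod_cast hfloor

lemma IsRSeminorm.le_mul_envNorm (hq : IsRSeminorm r q) {M : ℝ} (hM0 : 0 < M)
    (hM : ∀ x ∈ convexHull ℝ {x | q x ≤ 1}, q x ≤ M) (x : X) : q x ≤ M * envNorm q x := by
  rw [← div_le_iff₀' hM0, envNorm, gauge_def']
  refine le_csInf ⟨q x + 1, ?_, subset_convexHull ℝ _ ?_⟩ ?_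
  · exact add_pos_of_nonneg_of_pos (hq.nonneg x) one_pos
  · have hpos : 0 < q x + 1 := add_pos_of_nonneg_of_pos (hq.nonneg x) one_pos
    rw [Set.mem_ofPred_eq, hq.smul, abs_of_pos (inv_pos.2 hpos), inv_mul_le_one₀ hpos]
    exact (lt_add_one _).le
  · rintro s ⟨hs, hmem⟩
    have hs : 0 < s := hs
    rw [div_le_iff₀ hM0]
    calc q x = s * q (s⁻¹ • x) := by
          rw [hq.smul, abs_of_pos (inv_pos.2 hs), mul_inv_cancel_left₀ hs.ne']
      _ ≤ s * M := by gcongr; exact hM _ hmem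

lemma EqualNormInfratype.le_mul_envNorm (h : EqualNormInfratype q β C) (hr : 0 < r)
    (hq : IsRSeminorm r q) (hβ0 : 0 ≤ β) (hβ1 : β < 1) (hC : 0 ≤ C) (x : X) :
    q x ≤ envelopeConstant r β C * envNorm q x :=
  hq.le_mul_envNorm (envelopeConstant_pos hr hβ1 hC)
    (fun _ hx => h.le_of_mem_convexHull hr hq hβ0 hβ1 hC hx) x

end EnvelopeBound

section Infratype

variable {X : Type*} [AddCommGroup X] [Module ℝ X] {r a θ : ℝ} {q0 q1 : X → ℝ}

lemma equalNormInfratype_thetaNorm (hr0 : 0 < r) (hr2 : r ≤ 2) (ha : 0 < a) (hθ0 : 0 < θ)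
    (hθ1 : θ < 1) (h0 : IsRSeminorm r q0) (h1 : IsRSeminorm r q1) (hT : Type2ConstLe q0 a) :
    EqualNormInfratype (thetaNorm q0 q1 θ) (1 / 2 + θ * (1 / r - 1 / 2)) (a ^ (1 - θ)) := by
  have hγ : 0 ≤ 1 / r - 1 / 2 := sub_nonneg.2 (one_div_le_one_div_of_le hr0 hr2)
  refine equalNormInfratype_of_type2BoundOn (thetaNorm_nonneg θ) (by positivity) (fun n => ?_)
    (by positivity)
  rcases n.eq_zero_or_pos with rfl | hn
  · intro x
    simp [(isRSeminorm_thetaNorm hr0 hr2 h0 h1 hθ0 hθ1).map_zero]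
  · rw [mul_comm θ, Real.rpow_mul n.cast_nonneg]
    exact (hT.type2BoundOn ha.le n).thetaNorm h0 h1 (h1.type2BoundOn hr0 hr2 n) ha
      (by positivity) hθ0 hθ1

end Infratype

theorem interpolation_space_locally_convex_general (r a θ : ℝ) (hr0 : 0 < r) (hr1 : r ≤ 1)
    (ha : 0 < a) (hθ0 : 0 < θ) (hθ : θ < r / (2 - r)) :
    ∃ C > (0 : ℝ), ∀ (X : Type uX) (_ : AddCommGroup X) (_ : Module ℝ X) (q0 q1 : X → ℝ),
      IsRSeminorm r q0 → IsRSeminorm r q1 → Type2ConstLe q0 a →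
      ∀ x, thetaNorm q0 q1 θ x ≤ C * envNorm (thetaNorm q0 q1 θ) x := by
  have hr2 : r ≤ 2 := by linarith
  have hθr : θ * (2 - r) < r := (lt_div_iff₀ (by linarith)).1 hθ
  have hθ1 : θ < 1 := by nlinarith
  have hβ0 : 0 ≤ 1 / 2 + θ * (1 / r - 1 / 2) := by
    have : 0 ≤ 1 / r - 1 / 2 := sub_nonneg.2 (one_div_le_one_div_of_le hr0 hr2)
    positivity
  have hβ1 : 1 / 2 + θ * (1 / r - 1 / 2) < 1 := by
    have : θ * (1 / r - 1 / 2) = θ * (2 - r) / r / 2 := by field_simp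
    have : θ * (2 - r) / r < 1 := (div_lt_one hr0).2 hθr
    linarith
  have hC : 0 ≤ a ^ (1 - θ) := by positivity
  refine ⟨_, envelopeConstant_pos hr0 hβ1 hC, fun X _ _ q0 q1 h0 h1 hT x => ?_⟩
  exact (equalNormInfratype_thetaNorm hr0 hr2 ha hθ0 hθ1 h0 h1 hT).le_mul_envNorm hr0
    (isRSeminorm_thetaNorm hr0 hr2 h0 h1 hθ0 hθ1) hβ0 hβ1 hC x

/-- **Lemma 5**. If `(X,‖·‖₀)` has type 2 constant at most `a` and `0 < θ < r/(2-r)`,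
then the interpolation space `X_θ = (X₀,X₁)_{θ,2}` satisfies `δ_{X_θ} ≤ C(a,θ,r)`. -/
theorem interpolation_space_locally_convex
    (r a θ : ℝ) (hr0 : 0 < r) (hr1 : r ≤ 1) (ha : 1 ≤ a)
    (hθ0 : 0 < θ) (hθ : θ < r / (2 - r)) :
    ∃ C > (0:ℝ), ∀ (X : Type uX) (_ : AddCommGroup X) (_ : Module ℝ X)
      (Q0 Q1 : RNormOn X r),
      (∃ c c' : ℝ, 0 < c ∧ ∀ x, c * Q1.q x ≤ Q0.q x ∧ Q0.q x ≤ c' * Q1.q x) →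
      CauchyComplete Q0.q →
      Type2ConstLe Q0.q a →
      ∀ x, thetaNorm Q0.q Q1.q θ x ≤ C * envNorm (thetaNorm Q0.q Q1.q θ) x := by
  obtain ⟨C, hC, h⟩ :=
    interpolation_space_locally_convex_general r a θ hr0 hr1 (by linarith) hθ0 hθ
  exact ⟨C, hC, fun X _ _ Q0 Q1 _ _ hT => h X _ _ Q0.q Q1.q Q0.isRSeminorm Q1.isRSeminorm hT⟩
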